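/- Let (X,T) be a topological dynamical system with finite topological entropy h_top(T) < ∞. Then for every analytic subset Z ⊆ X, the Bowen topological entropy of Z equals the supremum of the Bowen topological entropies of its compact subsets: h^B_top(T,Z) = sup { h^B_top(T,K) : K ⊆ Z, K compact }. -/

import Mathlib

/-!
Cover by Bowen balls with centres restricted to a countable set having finitely many members at
each order `n`; this changes the functionals `M^s_{N,ε}` only by a constant factor in `ε`. For such
a family, if increasing sets `A k` have covers of `s`-cost at most `L`, then `⋃ k, A k` has covers
of `s'`-cost at most `L + η` for all `s' > s` and `η > 0`: a pointwise limit `I` of the covers has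
cost at most `L`, and agrees with some of them at all orders below any given bound, so that `I`
together with high-order tails of those covers is a cover; the tails are cheap because `s' > s`.

Thus positivity of the functional passes from an increasing union to one of its members at an
arbitrarily small loss in the exponent. Choquet's capacitability argument applied to `Z = f(ℕ^ℕ)`
tolerates this loss: it bounds the coordinates one at a time, along a decreasing sequence of
exponents, and produces the compact set `f {x | x ≤ b}`, every open cover of which covers some
`f {x | x i ≤ b i for i < k}`.
-/

open Filter Set MeasureTheory Topology
open scoped ENNReal NNReal

section Core

variable {X : Type*} [MetricSpace X]

/-- The open Bowen ball `B_n(x, ε)` = `{y : d_n(x,y) < ε}` where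
`d_n(x,y) = max_{0 ≤ k ≤ n-1} d(T^k x, T^k y)` is the `n`-th Bowen metric. -/
def bowenBall (T : X → X) (x : X) (n : ℕ) (ε : ℝ) : Set X :=
  {y | ∀ k < n, dist (T^[k] x) (T^[k] y) < ε}

/-- The closed Bowen ball `B̄_n(x, ε)` = `{y : d_n(x,y) ≤ ε}`. -/
def bowenClosedBall (T : X → X) (x : X) (n : ℕ) (ε : ℝ) : Set X :=
  {y | ∀ k < n, dist (T^[k] x) (T^[k] y) ≤ ε}

/-- `M^s_{N,ε}(Z)`: infimum of `Σ_i exp (- s n_i)` over finite or countable families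
of open Bowen balls `{B_{n_i}(x_i, ε)}` with `n_i ≥ N` covering `Z`. -/
noncomputable def Mpre (T : X → X) (s : ℝ) (N : ℕ) (ε : ℝ) (Z : Set X) : ℝ≥0∞ :=
  ⨅ (I : Set ℕ) (x : ℕ → X) (n : ℕ → ℕ) (_ : ∀ i ∈ I, N ≤ n i)
    (_ : Z ⊆ ⋃ i ∈ I, bowenBall T (x i) (n i) ε),
    ∑' i : I, ENNReal.ofReal (Real.exp (-s * n i))

/-- `M^s_ε(Z) = lim_{N → ∞} M^s_{N,ε}(Z)` (the quantity is nondecreasing in `N`). -/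
noncomputable def MpreEps (T : X → X) (s : ℝ) (ε : ℝ) (Z : Set X) : ℝ≥0∞ :=
  ⨆ N : ℕ, Mpre T s N ε Z

/-- `M^s(Z) = lim_{ε → 0} M^s_ε(Z)` (the quantity is nondecreasing as `ε` decreases). -/
noncomputable def Mtop (T : X → X) (s : ℝ) (Z : Set X) : ℝ≥0∞ :=
  ⨆ (ε : ℝ) (_ : 0 < ε), MpreEps T s ε Z

/-- Bowen's topological entropy `h^B_top(T,Z)`: the critical value of `s` at which
`M^s(Z)` jumps from `∞` to `0`. -/
noncomputable def bowenEntropy (T : X → X) (Z : Set X) : ℝ≥0∞ :=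
  ⨆ (s : ℝ) (_ : Mtop T s Z = ∞), ENNReal.ofReal s

/-- `P^s_{N,ε}(Z)`: suprema of `Σ_i exp (- s n_i)` over finite or countable pairwise
disjoint families of closed Bowen balls `{B̄_{n_i}(x_i, ε)}` with `x_i ∈ Z`, `n_i ≥ N`. -/
noncomputable def Ppre (T : X → X) (s : ℝ) (N : ℕ) (ε : ℝ) (Z : Set X) : ℝ≥0∞ :=
  ⨆ (I : Set ℕ) (x : ℕ → X) (n : ℕ → ℕ) (_ : ∀ i ∈ I, x i ∈ Z ∧ N ≤ n i)
    (_ : ∀ i ∈ I, ∀ j ∈ I, i ≠ j →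
      Disjoint (bowenClosedBall T (x i) (n i) ε) (bowenClosedBall T (x j) (n j) ε)),
    ∑' i : I, ENNReal.ofReal (Real.exp (-s * n i))

/-- `P^s_ε(Z) = lim_{N → ∞} P^s_{N,ε}(Z)` (the quantity is nonincreasing in `N`). -/
noncomputable def PpreEps (T : X → X) (s : ℝ) (ε : ℝ) (Z : Set X) : ℝ≥0∞ :=
  ⨅ N : ℕ, Ppre T s N ε Z

/-- `𝒫^s_ε(Z) = inf { Σ_{i} P^s_ε(Z_i) : ⋃_i Z_i ⊇ Z }`. -/
noncomputable def Pouter (T : X → X) (s : ℝ) (ε : ℝ) (Z : Set X) : ℝ≥0∞ :=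
  ⨅ (Zs : ℕ → Set X) (_ : Z ⊆ ⋃ i, Zs i), ∑' i, PpreEps T s ε (Zs i)

/-- `h^P_top(T,Z,ε)`: the critical value of `s` at which `𝒫^s_ε(Z)` jumps from `∞` to `0`. -/
noncomputable def packEntropyEps (T : X → X) (ε : ℝ) (Z : Set X) : ℝ≥0∞ :=
  ⨆ (s : ℝ) (_ : Pouter T s ε Z = ∞), ENNReal.ofReal s

/-- The packing topological entropy `h^P_top(T,Z) = lim_{ε → 0} h^P_top(T,Z,ε)`
(the quantity is nondecreasing as `ε` decreases). -/
noncomputable def packEntropy (T : X → X) (Z : Set X) : ℝ≥0∞ :=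
  ⨆ (ε : ℝ) (_ : 0 < ε), packEntropyEps T ε Z

/-- `r_n(Z,ε)`: the largest cardinality of an `(n,ε)`-separated subset of `Z`,
i.e. a set in which distinct points `x, y` satisfy `d_n(x,y) > ε`. -/
noncomputable def maxSep (T : X → X) (Z : Set X) (n : ℕ) (ε : ℝ) : ℝ≥0∞ :=
  ⨆ (E : Finset X) (_ : ↑E ⊆ Z ∧
    ∀ x ∈ E, ∀ y ∈ E, x ≠ y → ∃ k < n, ε < dist (T^[k] x) (T^[k] y)),
    (E.card : ℝ≥0∞)

/-- Logarithm on `ℝ≥0∞` (with `elog ∞ = ∞`), used for counting quantities. -/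
noncomputable def elog (x : ℝ≥0∞) : ℝ≥0∞ :=
  if x = ∞ then ∞ else ENNReal.ofReal (Real.log x.toReal)

/-- The upper capacity topological entropy
`h^{UC}_top(T,Z) = lim_{ε → 0} limsup_{n → ∞} (1/n) log r_n(Z,ε)`. -/
noncomputable def upcapEntropy (T : X → X) (Z : Set X) : ℝ≥0∞ :=
  ⨆ (ε : ℝ) (_ : 0 < ε), Filter.limsup (fun n : ℕ => elog (maxSep T Z n ε) / n) Filter.atTop

/-- `- log x` as a function `ℝ≥0∞ → ℝ≥0∞` (with `negLog 0 = ∞`), used for measures of balls. -/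
noncomputable def negLog (x : ℝ≥0∞) : ℝ≥0∞ :=
  if x = 0 then ∞ else ENNReal.ofReal (-Real.log x.toReal)

variable [MeasurableSpace X]

/-- The lower local entropy `h̲_μ(T,x) = lim_{ε→0} liminf_{n→∞} -(1/n) log μ(B_n(x,ε))`. -/
noncomputable def lowerLocalEntropy (T : X → X) (μ : Measure X) (x : X) : ℝ≥0∞ :=
  ⨆ (ε : ℝ) (_ : 0 < ε),
    Filter.liminf (fun n : ℕ => negLog (μ (bowenBall T x n ε)) / n) Filter.atTop

/-- The upper local entropy `h̄_μ(T,x) = lim_{ε→0} limsup_{n→∞} -(1/n) log μ(B_n(x,ε))`. -/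
noncomputable def upperLocalEntropy (T : X → X) (μ : Measure X) (x : X) : ℝ≥0∞ :=
  ⨆ (ε : ℝ) (_ : 0 < ε),
    Filter.limsup (fun n : ℕ => negLog (μ (bowenBall T x n ε)) / n) Filter.atTop

/-- The measure-theoretical lower entropy `h̲_μ(T) = ∫ h̲_μ(T,x) dμ(x)`. -/
noncomputable def lowerEntropy (T : X → X) (μ : Measure X) : ℝ≥0∞ :=
  ∫⁻ x, lowerLocalEntropy T μ x ∂μ

/-- The measure-theoretical upper entropy `h̄_μ(T) = ∫ h̄_μ(T,x) dμ(x)`. -/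
noncomputable def upperEntropy (T : X → X) (μ : Measure X) : ℝ≥0∞ :=
  ∫⁻ x, upperLocalEntropy T μ x ∂μ

end Core

section Capacitability

lemma exists_forall_box {P : ℕ → Set (ℕ → ℕ) → Prop} (hP₀ : P 0 univ)
    (hP : ∀ k (A : ℕ → Set (ℕ → ℕ)), Monotone A → P k (⋃ n, A n) → ∃ n, P (k + 1) (A n)) :
    ∃ b : ℕ → ℕ, ∀ k, P k {x | ∀ i < k, x i ≤ b i} := by
  have hstep : ∀ k S, P k S → ∃ n, P (k + 1) (S ∩ {x | x k ≤ n}) := by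
    intro k S hS
    refine hP k (fun n => S ∩ {x | x k ≤ n}) (fun m n hmn x hx => ⟨hx.1, hx.2.trans hmn⟩) ?_
    have hcover : ⋃ n, {x : ℕ → ℕ | x k ≤ n} = univ := by ext x; simpa using ⟨x k, le_rfl⟩
    rwa [← inter_iUnion, hcover, inter_univ]
  choose! v hv using hstep
  let box : ℕ → Set (ℕ → ℕ) := fun k => Nat.rec univ (fun k S => S ∩ {x | x k ≤ v k S}) k
  have hbox_succ : ∀ k, box (k + 1) = box k ∩ {x | x k ≤ v k (box k)} := fun _ => rfl
  have hbox : ∀ k, box k = {x | ∀ i < k, x i ≤ v i (box i)} := by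
    intro k
    induction k with
    | zero => simp [box]
    | succ k ih =>
      simp only [Nat.forall_lt_succ_right, hbox_succ, ofPred_and, ← ih]
  refine ⟨fun i => v i (box i), fun k => hbox k ▸ ?_⟩
  induction k with
  | zero => exact hP₀
  | succ k ih => exact hv k (box k) ih

lemma exists_box_subset_of_isOpen {b : ℕ → ℕ} {W : Set (ℕ → ℕ)} (hW : IsOpen W)
    (hbW : Iic b ⊆ W) : ∃ k, {x | ∀ i < k, x i ≤ b i} ⊆ W := by
  let core : ℕ → Set (ℕ → ℕ) := fun k => {y | PiNat.cylinder y k ⊆ W}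
  have hcore_open : ∀ k, IsOpen (core k) := fun k => isOpen_iff_mem_nhds.2 fun y hy => by
    filter_upwards [(PiNat.isOpen_cylinder _ y k).mem_nhds (PiNat.self_mem_cylinder y k)] with z hz
    rwa [mem_ofPred_eq, PiNat.mem_cylinder_iff_eq.1 hz]
  have hcore_mono : Monotone core := fun m n hmn y hy => (PiNat.cylinder_anti y hmn).trans hy
  have hcover : Iic b ⊆ ⋃ k, core k := fun y hy => by
    obtain ⟨_, ⟨z, k, rfl⟩, hyz, hzW⟩ :=
      (PiNat.isTopologicalBasis_cylinders _).exists_subset_of_mem_open (hbW hy) hW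
    exact mem_iUnion.2 ⟨k, by rwa [mem_ofPred_eq, PiNat.mem_cylinder_iff_eq.1 hyz]⟩
  have hcompact : IsCompact (Iic b) := Icc_bot (a := b) ▸ isCompact_Icc
  obtain ⟨k, hk⟩ := hcompact.elim_directed_cover core hcore_open hcover hcore_mono.directed_le
  refine ⟨k, fun x hx => ?_⟩
  have hxb : x ⊓ b ∈ Iic b := mem_Iic.2 inf_le_right
  exact hk hxb fun i hi => (inf_eq_left.2 (hx i hi)).symm

/-- Choquet's capacitability theorem for a decreasing sequence of properties `P k`, the index `k`
measuring the loss incurred in the steps. -/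
theorem exists_isCompact_forall_isOpen {X : Type*} [TopologicalSpace X] {f : (ℕ → ℕ) → X}
    (hf : Continuous f) {P : ℕ → Set X → Prop} (hmono : ∀ k, Monotone (P k))
    (hP₀ : P 0 (range f))
    (hP : ∀ k (A : ℕ → Set X), Monotone A → P k (⋃ n, A n) → ∃ n, P (k + 1) (A n)) :
    ∃ K ⊆ range f, IsCompact K ∧ ∀ V, IsOpen V → K ⊆ V → ∃ k, P k V := by
  obtain ⟨b, hb⟩ := exists_forall_box (P := fun k S => P k (f '' S)) (by rwa [image_univ])
    fun k A hA hPA => hP k (fun n => f '' A n) (fun m n hmn => image_mono (hA hmn))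
      (by rwa [image_iUnion] at hPA)
  have hcompact : IsCompact (Iic b) := Icc_bot (a := b) ▸ isCompact_Icc
  refine ⟨f '' Iic b, image_subset_range f _, hcompact.image hf, fun V hV hbV => ?_⟩
  obtain ⟨k, hk⟩ := exists_box_subset_of_isOpen (hV.preimage hf) (image_subset_iff.1 hbV)
  exact ⟨k, hmono k (image_subset_iff.2 hk) (hb k)⟩

end Capacitability

section CoverCost

/-- The Carathéodory-type covering functional: the infimum of `Σ_{i ∈ J} w i` over the subfamilies
`J` of `(U i)` that cover `A`. -/
noncomputable def coverCost {X ι : Type*} (U : ι → Set X) (w : ι → ℝ≥0∞) (A : Set X) : ℝ≥0∞ :=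
  ⨅ (J : Set ι) (_ : A ⊆ ⋃ i ∈ J, U i), ∑' i : J, w i

/-- The weights `w'` are bounded by `w`, and are `o(w)` along the cofinite filter. -/
structure NegligibleWeight {ι : Type*} (w' w : ι → ℝ≥0∞) : Prop where
  le : w' ≤ w
  eventually_le_mul : ∀ δ ≠ 0, ∀ᶠ i in cofinite, w' i ≤ δ * w i

variable {X ι κ : Type*} {U : ι → Set X} {V : κ → Set X} {w w' : ι → ℝ≥0∞} {A B : Set X}

lemma coverCost_le {J : Set ι} (hJ : A ⊆ ⋃ i ∈ J, U i) : coverCost U w A ≤ ∑' i : J, w i :=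
  iInf₂_le J hJ

lemma coverCost_empty : coverCost U w ∅ = 0 :=
  le_zero_iff.1 ((coverCost_le (J := ∅) (empty_subset _)).trans_eq (by simp))

lemma coverCost_le_tsum_add_tsum {I : Set ι} {J : ℕ → Set ι}
    (h : A ⊆ ⋃ i ∈ I ∪ ⋃ j, J j, U i) :
    coverCost U w A ≤ ∑' i : I, w i + ∑' j, ∑' i : J j, w i :=
  calc coverCost U w A ≤ ∑' i : (I ∪ ⋃ j, J j : Set ι), w i := coverCost_le h
    _ ≤ ∑' i : I, w i + ∑' i : (⋃ j, J j : Set ι), w i := ENNReal.tsum_union_le w _ _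
    _ ≤ ∑' i : I, w i + ∑' j, ∑' i : J j, w i := by
        gcongr
        exact ENNReal.tsum_iUnion_le_tsum w J

lemma exists_cover_of_coverCost_lt {L : ℝ≥0∞} (h : coverCost U w A < L) :
    ∃ J : Set ι, A ⊆ (⋃ i ∈ J, U i) ∧ ∑' i : J, w i < L := by
  simpa only [coverCost, iInf_lt_iff, exists_prop] using h

lemma coverCost_mono (h : A ⊆ B) : coverCost U w A ≤ coverCost U w B :=
  le_iInf₂ fun _ hJ => coverCost_le (h.trans hJ)

lemma coverCost_le_mul {a : ℝ≥0∞} (ha₀ : a ≠ 0) (ha : a ≠ ∞) (h : ∀ i, w' i ≤ a * w i) :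
    coverCost U w' A ≤ a * coverCost U w A := by
  simp only [coverCost, ENNReal.mul_iInf_of_ne ha₀ ha, ← ENNReal.tsum_mul_left]
  exact iInf₂_mono fun J _ => ENNReal.tsum_le_tsum fun i => h i

lemma coverCost_le_of_refines {v : κ → ℝ≥0∞} (h : ∀ j, ∃ i, w i ≤ v j ∧ A ∩ V j ⊆ U i) :
    coverCost U w A ≤ coverCost V v A := by
  choose g hg hVU using h
  refine le_iInf₂ fun J hJ => ?_
  have hcover : A ⊆ ⋃ i ∈ g '' J, U i := fun x hx => by
    obtain ⟨j, hj, hxj⟩ := mem_iUnion₂.1 (hJ hx)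
    exact mem_iUnion₂.2 ⟨g j, mem_image_of_mem g hj, hVU j ⟨hx, hxj⟩⟩
  calc coverCost U w A ≤ ∑' i : g '' J, w i := coverCost_le hcover
    _ ≤ ∑' j : J, w (g j) :=
        ENNReal.tsum_le_tsum_comp_of_surjective (imageFactorization_surjective (f := g))
          fun i : g '' J => w i
    _ ≤ ∑' j : J, v j := ENNReal.tsum_le_tsum fun j => hg j

lemma exists_limit_subset (J : ℕ → Set ι) :
    ∃ I : Set ι, ∀ F : Set ι, F.Finite → ∃ᶠ k in atTop, ∀ i ∈ F, (i ∈ J k ↔ i ∈ I) := by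
  refine ⟨{i | ∀ᶠ k in hyperfilter ℕ, i ∈ J k}, fun F hF => ?_⟩
  refine Frequently.filter_mono (Eventually.frequently ?_) Nat.hyperfilter_le_atTop
  refine (eventually_all_finite hF).2 fun i _ => ?_
  rcases (hyperfilter ℕ).em (fun k => i ∈ J k) with h | h
  · filter_upwards [h] with k hk using iff_of_true hk h
  · filter_upwards [h] with k hk using iff_of_false hk (Ultrafilter.eventually_not.1 h)

lemma tsum_subtype_le_of_forall_finset {I : Set ι} {L : ℝ≥0∞}
    (h : ∀ F : Finset ι, ↑F ⊆ I → ∃ J : Set ι, ↑F ⊆ J ∧ ∑' i : J, w i ≤ L) :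
    ∑' i : I, w i ≤ L := by
  rw [ENNReal.tsum_eq_iSup_sum]
  refine iSup_le fun S => ?_
  obtain ⟨J, hSJ, hJ⟩ := h (S.map (Function.Embedding.subtype _)) (by simp)
  calc ∑ i ∈ S, w i = ∑ i ∈ S.map (Function.Embedding.subtype _), w i := by simp
    _ = ∑' i : (S.map (Function.Embedding.subtype _) : Set ι), w i :=
        (Finset.tsum_subtype' _ w).symm
    _ ≤ ∑' i : J, w i := ENNReal.tsum_mono_subtype w hSJ
    _ ≤ L := hJ

lemma tsum_subtype_le_mul_tsum_subtype {S J : Set ι} (hSJ : S ⊆ J) {δ : ℝ≥0∞}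
    (h : ∀ i ∈ S, w' i ≤ δ * w i) : ∑' i : S, w' i ≤ δ * ∑' i : J, w i :=
  calc ∑' i : S, w' i ≤ ∑' i : S, δ * w i := ENNReal.tsum_le_tsum fun i => h i i.2
    _ = δ * ∑' i : S, w i := ENNReal.tsum_mul_left
    _ ≤ δ * ∑' i : J, w i := by gcongr; exact ENNReal.tsum_mono_subtype w hSJ

lemma NegligibleWeight.coverCost_iUnion_le (hw : NegligibleWeight w' w) {A : ℕ → Set X}
    (hA : Monotone A) : coverCost U w' (⋃ k, A k) ≤ ⨆ k, coverCost U w (A k) := by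
  refine le_of_forall_gt_imp_ge_of_dense fun L hL => ?_
  choose J hJcover hJ using fun k =>
    exists_cover_of_coverCost_lt ((le_iSup (fun k => coverCost U w (A k)) k).trans_lt hL)
  obtain ⟨I, hI⟩ := exists_limit_subset J
  have hIcost : ∑' i : I, w' i ≤ L := by
    refine tsum_subtype_le_of_forall_finset fun F hFI => ?_
    obtain ⟨k, hk⟩ := (hI F F.finite_toSet).exists
    exact ⟨J k, fun i hi => (hk i hi).2 (hFI hi),
      (ENNReal.tsum_le_tsum fun i : J k => hw.le i).trans (hJ k).le⟩
  refine ENNReal.le_of_forall_pos_le_add fun η hη hL_top => ?_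
  obtain ⟨δ, hδ₀, hδ⟩ := ENNReal.exists_pos_tsum_mul_lt_of_countable
    (ENNReal.coe_ne_zero.2 hη.ne') (fun _ : ℕ => L) fun _ => hL_top.ne
  have hagree : ∀ j, ∃ k ≥ j, ∀ i, ¬ w' i ≤ δ j * w i → (i ∈ J k ↔ i ∈ I) := fun j =>
    frequently_atTop.1 (hI _ (hw.eventually_le_mul _ (ENNReal.coe_ne_zero.2 (hδ₀ j).ne'))) j
  choose k hk hkI using hagree
  let tail : ℕ → Set ι := fun j => {i ∈ J (k j) | w' i ≤ δ j * w i}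
  have htail : ∀ j, ∑' i : tail j, w' i ≤ L * δ j := fun j =>
    calc ∑' i : tail j, w' i ≤ δ j * ∑' i : J (k j), w i :=
          tsum_subtype_le_mul_tsum_subtype (fun i hi => hi.1) fun i hi => hi.2
      _ ≤ L * δ j := by rw [mul_comm]; gcongr; exact (hJ _).le
  have hcover : ⋃ j, A j ⊆ ⋃ i ∈ I ∪ ⋃ j, tail j, U i := by
    refine iUnion_subset fun j x hx => ?_
    obtain ⟨i, hi, hxi⟩ := mem_iUnion₂.1 (hJcover (k j) (hA (hk j) hx))
    refine mem_iUnion₂.2 ⟨i, ?_, hxi⟩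
    by_cases hij : w' i ≤ δ j * w i
    · exact Or.inr (mem_iUnion.2 ⟨j, hi, hij⟩)
    · exact Or.inl ((hkI j i hij).1 hi)
  calc coverCost U w' (⋃ j, A j) ≤ ∑' i : I, w' i + ∑' j, ∑' i : tail j, w' i :=
        coverCost_le_tsum_add_tsum hcover
    _ ≤ L + ∑' j, L * δ j := add_le_add hIcost (ENNReal.tsum_le_tsum htail)
    _ ≤ L + η := by gcongr

lemma NegligibleWeight.exists_lt_coverCost (hw : NegligibleWeight w' w) {A : ℕ → Set X}
    (hA : Monotone A) {c : ℝ≥0∞} (hc : c < coverCost U w' (⋃ k, A k)) :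
    ∃ k, c < coverCost U w (A k) :=
  lt_iSup_iff.1 (hc.trans_le (hw.coverCost_iUnion_le hA))

theorem exists_isCompact_le_coverCost [TopologicalSpace X] (hU : ∀ i, IsOpen (U i))
    {f : (ℕ → ℕ) → X} (hf : Continuous f) {w : ℕ → ι → ℝ≥0∞} {v : ι → ℝ≥0∞}
    (hw : ∀ k, NegligibleWeight (w k) (w (k + 1))) (hwv : ∀ k, w k ≤ v) {c : ℝ≥0∞}
    (hc : c < coverCost U (w 0) (range f)) :
    ∃ K ⊆ range f, IsCompact K ∧ c ≤ coverCost U v K := by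
  obtain ⟨K, hKf, hK, hKV⟩ := exists_isCompact_forall_isOpen hf
    (P := fun k A => c < coverCost U (w k) A) (fun k A B hAB hA => hA.trans_le (coverCost_mono hAB))
    hc fun k A hA => (hw k).exists_lt_coverCost hA
  refine ⟨K, hKf, hK, le_iInf₂ fun J hJ => ?_⟩
  obtain ⟨k, hk⟩ := hKV _ (isOpen_biUnion fun i _ => hU i) hJ
  calc c ≤ coverCost U (w k) (⋃ i ∈ J, U i) := hk.le
    _ ≤ ∑' i : J, w k i := coverCost_le subset_rfl
    _ ≤ ∑' i : J, v i := ENNReal.tsum_le_tsum fun i => hwv k i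

end CoverCost

section ExpWeight

/-- The weight `exp (-s n)` of a Bowen ball of order `n`. -/
noncomputable def expWeight (s : ℝ) (n : ℕ) : ℝ≥0∞ := ENNReal.ofReal (Real.exp (-s * n))

lemma expWeight_ne_zero (s : ℝ) (n : ℕ) : expWeight s n ≠ 0 :=
  (ENNReal.ofReal_pos.2 (Real.exp_pos _)).ne'

lemma expWeight_ne_top (s : ℝ) (n : ℕ) : expWeight s n ≠ ∞ := ENNReal.ofReal_ne_top

lemma expWeight_add (s t : ℝ) (n : ℕ) : expWeight (s + t) n = expWeight s n * expWeight t n := by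
  rw [expWeight, expWeight, expWeight, ← ENNReal.ofReal_mul (Real.exp_pos _).le, ← Real.exp_add]
  ring_nf

lemma antitone_expWeight : Antitone expWeight := fun s t hst n => by
  unfold expWeight
  gcongr

lemma antitone_expWeight_apply {s : ℝ} (hs : 0 ≤ s) : Antitone (expWeight s) := fun _ _ hmn =>
  ENNReal.ofReal_le_ofReal <| Real.exp_le_exp.2 <|
    mul_le_mul_of_nonpos_left (Nat.cast_le.2 hmn) (neg_nonpos.2 hs)

lemma tendsto_expWeight {s : ℝ} (hs : 0 < s) : Tendsto (expWeight s) atTop (𝓝 0) := by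
  rw [← ENNReal.ofReal_zero]
  exact ENNReal.tendsto_ofReal <| Real.tendsto_exp_atBot.comp <|
    tendsto_natCast_atTop_atTop.const_mul_atTop_of_neg (neg_neg_of_pos hs)

lemma negligibleWeight_expWeight {ι : Type*} {order : ι → ℕ}
    (horder : Tendsto order cofinite atTop) {s t : ℝ} (hst : s < t) :
    NegligibleWeight (fun i => expWeight t (order i)) (fun i => expWeight s (order i)) where
  le i := antitone_expWeight hst.le (order i)
  eventually_le_mul δ hδ := by
    filter_upwards [((tendsto_expWeight (sub_pos.2 hst)).comp horder).eventually_le_const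
      (pos_iff_ne_zero.2 hδ)] with i hi
    calc expWeight t (order i) = expWeight (t - s) (order i) * expWeight s (order i) := by
          rw [← expWeight_add, sub_add_cancel]
      _ ≤ δ * expWeight s (order i) := by gcongr; exact hi

end ExpWeight

section BowenBall

lemma totallyBounded_of_forall_image_eval {ι : Type*} {E : ι → Type*} [∀ i, UniformSpace (E i)]
    {S : Set (∀ i, E i)} (h : ∀ i, TotallyBounded (Function.eval i '' S)) : TotallyBounded S := by
  refine totallyBounded_iff_ultrafilter.2 fun 𝓕 h𝓕 => (cauchy_pi_iff' E).2 fun i => ?_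
  refine totallyBounded_iff_ultrafilter.1 (h i) (𝓕.map (Function.eval i)) ?_
  exact (map_mono h𝓕).trans_eq map_principal

variable {X : Type*} [MetricSpace X] {T : X → X} {x y z : X} {n : ℕ} {ε : ℝ}

/-- The orbit segment `(x, T x, …, T^{n-1} x)`. The Bowen metric `d_n` is the pullback under this
map of the sup metric on `X^n`. -/
def orbitSegment (T : X → X) (n : ℕ) (x : X) : Fin n → X := fun k => T^[k] x

lemma continuous_orbitSegment (hT : Continuous T) (n : ℕ) : Continuous (orbitSegment T n) :=
  continuous_pi fun k => hT.iterate k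

lemma bowenBall_eq_preimage_ball (hε : 0 < ε) :
    bowenBall T x n ε = orbitSegment T n ⁻¹' Metric.ball (orbitSegment T n x) ε := by
  ext y
  simp [bowenBall, orbitSegment, dist_pi_lt_iff hε, dist_comm, Fin.forall_iff]

lemma isOpen_bowenBall (hT : Continuous T) (hε : 0 < ε) : IsOpen (bowenBall T x n ε) := by
  rw [bowenBall_eq_preimage_ball hε]
  exact Metric.isOpen_ball.preimage (continuous_orbitSegment hT n)

lemma bowenBall_third_subset (hx : y ∈ bowenBall T x n (ε / 3))
    (hz : y ∈ bowenBall T z n (ε / 3)) : bowenBall T x n (ε / 3) ⊆ bowenBall T z n ε := by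
  intro u hu k hk
  have hxy := hx k hk
  rw [dist_comm] at hxy
  linarith [dist_triangle4 (T^[k] z) (T^[k] y) (T^[k] x) (T^[k] u), hz k hk, hu k hk]

lemma exists_finite_bowenBall_cover {Z : Set X} (hZ : ∀ k, TotallyBounded (T^[k] '' Z))
    (n : ℕ) (hε : 0 < ε) : ∃ F : Set X, F.Finite ∧ Z ⊆ ⋃ x ∈ F, bowenBall T x n ε := by
  have hseg : TotallyBounded (orbitSegment T n '' Z) :=
    totallyBounded_of_forall_image_eval fun k => by
      rw [image_image]
      exact hZ k
  obtain ⟨F, -, hF, hcover⟩ := exists_subset_image_finite_and.1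
    (Metric.finite_approx_of_totallyBounded hseg ε hε)
  refine ⟨F, hF, ?_⟩
  simpa only [bowenBall_eq_preimage_ball hε, ← preimage_iUnion, ← image_subset_iff, biUnion_image]
    using hcover

end BowenBall

section BowenCost

variable {X : Type*} [MetricSpace X] {T : X → X} {s t ε : ℝ} {N : ℕ} {S : Set (ℕ × X)}
  {A : Set X}

/-- The covering functional for the Bowen balls `B_n(x, ε)` with `(n, x) ∈ S`, weighted by
`exp (-s n)`. For `S = {(n, x) | N ≤ n}` this is `M^s_{N,ε}`. -/
noncomputable def bowenCost (T : X → X) (s ε : ℝ) (S : Set (ℕ × X)) (A : Set X) : ℝ≥0∞ :=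
  coverCost (fun p : S => bowenBall T p.1.2 p.1.1 ε) (fun p : S => expWeight s p.1.1) A

lemma Mpre_le_tsum [Nonempty X] {κ : Type*} [Countable κ] (x : κ → X) (n : κ → ℕ)
    (hn : ∀ i, N ≤ n i) (hA : A ⊆ ⋃ i, bowenBall T (x i) (n i) ε) :
    Mpre T s N ε A ≤ ∑' i, expWeight s (n i) := by
  obtain ⟨e, he⟩ := exists_injective_nat κ
  let x' : ℕ → X := Function.extend e x fun _ => Classical.arbitrary X
  let n' : ℕ → ℕ := Function.extend e n 0
  have hx' : ∀ i, x' (e i) = x i := he.extend_apply _ _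
  have hn' : ∀ i, n' (e i) = n i := he.extend_apply _ _
  have hn'_ge : ∀ j ∈ range e, N ≤ n' j := forall_mem_range.2 fun i => (hn i).trans_eq (hn' i).symm
  have hA' : A ⊆ ⋃ j ∈ range e, bowenBall T (x' j) (n' j) ε := by
    simpa only [biUnion_range, hx', hn'] using hA
  calc Mpre T s N ε A ≤ ∑' j : range e, expWeight s (n' j) :=
        iInf_le_of_le (range e) <| iInf_le_of_le x' <| iInf_le_of_le n' <| iInf₂_le hn'_ge hA'
    _ = ∑' i, expWeight s (n' (e i)) := tsum_range (fun j => expWeight s (n' j)) he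
    _ = ∑' i, expWeight s (n i) := by simp only [hn']

lemma countable_of_tsum_expWeight_ne_top {ι : Type*} {order : ι → ℕ}
    (h : ∑' i, expWeight s (order i) ≠ ∞) : Countable ι := by
  simpa [Function.support, expWeight_ne_zero, countable_univ_iff] using
    Summable.countable_support_ennreal h

lemma Mpre_eq_bowenCost [Nonempty X] :
    Mpre T s N ε A = bowenCost T s ε {p | N ≤ p.1} A := by
  refine le_antisymm (le_iInf₂ fun J hJ => ?_) ?_
  · rcases eq_or_ne (∑' p : J, expWeight s p.1.1.1) ∞ with htop | htop
    · exact le_top.trans_eq htop.symm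
    have : Countable J := countable_of_tsum_expWeight_ne_top htop
    exact Mpre_le_tsum (fun p : J => p.1.1.2) (fun p : J => p.1.1.1) (fun p => p.1.2)
      (by rwa [biUnion_eq_iUnion] at hJ)
  · refine le_iInf fun I => le_iInf fun x => le_iInf fun n => le_iInf₂ fun hn hA => ?_
    rw [biUnion_eq_iUnion] at hA
    let g : I → {p : ℕ × X | N ≤ p.1} := fun i => ⟨(n i, x i), hn i i.2⟩
    exact (coverCost_le (by rwa [biUnion_range])).trans <|
      ENNReal.tsum_le_tsum_comp_of_surjective (rangeFactorization_surjective (f := g))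
        fun p : range g => expWeight s p.1.1.1

lemma bowenCost_anti {S' : Set (ℕ × X)} (hst : s ≤ t) (hS : S ⊆ S') :
    bowenCost T t ε S' A ≤ bowenCost T s ε S A :=
  coverCost_le_of_refines fun p =>
    ⟨⟨p, hS p.2⟩, antitone_expWeight hst p.1.1, inter_subset_right⟩

lemma bowenCost_le_of_bowenBall_cover {F : ℕ → Set X}
    (hF : ∀ n, A ⊆ ⋃ x ∈ F n, bowenBall T x n (ε / 3)) :
    bowenCost T s ε {p | N ≤ p.1 ∧ p.2 ∈ F p.1} A ≤ bowenCost T s (ε / 3) {p | N ≤ p.1} A := by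
  rcases A.eq_empty_or_nonempty with rfl | hA
  · exact coverCost_empty.trans_le zero_le
  have hcenter : ∀ n x, ∃ z ∈ F n, A ∩ bowenBall T x n (ε / 3) ⊆ bowenBall T z n ε := by
    intro n x
    rcases (A ∩ bowenBall T x n (ε / 3)).eq_empty_or_nonempty with hempty | ⟨y, hyA, hyx⟩
    · obtain ⟨y, hyA⟩ := hA
      obtain ⟨z, hz, -⟩ := mem_iUnion₂.1 (hF n hyA)
      exact ⟨z, hz, hempty ▸ empty_subset _⟩
    · obtain ⟨z, hz, hyz⟩ := mem_iUnion₂.1 (hF n hyA)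
      exact ⟨z, hz, inter_subset_right.trans (bowenBall_third_subset hyx hyz)⟩
  refine coverCost_le_of_refines fun ⟨⟨n, x⟩, hn⟩ => ?_
  obtain ⟨z, hz, hzx⟩ := hcenter n x
  exact ⟨⟨(n, z), hn, hz⟩, le_rfl, hzx⟩

lemma tendsto_fst_cofinite_atTop {α : Type*} {S : Set (ℕ × α)}
    (hS : ∀ n, {x | (n, x) ∈ S}.Finite) : Tendsto (fun p : S => p.1.1) cofinite atTop := by
  refine tendsto_atTop.2 fun m => ?_
  have hfin : (⋃ n ∈ Iio m, Prod.mk n '' {x | (n, x) ∈ S}).Finite :=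
    (finite_Iio m).biUnion fun n _ => (hS n).image _
  refine (hfin.preimage Subtype.val_injective.injOn).subset fun p hp => ?_
  have hpm : p.1.1 < m := by simpa using hp
  exact mem_iUnion₂.2 ⟨p.1.1, hpm, p.1.2, p.2, rfl⟩

lemma exists_isCompact_Mpre_pos (hT : Continuous T) {f : (ℕ → ℕ) → X} (hf : Continuous f)
    (hbdd : ∀ k, TotallyBounded (T^[k] '' range f)) (hst : s < t) (hε : 0 < ε)
    (hpos : 0 < Mpre T t N ε (range f)) :
    ∃ K ⊆ range f, IsCompact K ∧ 0 < Mpre T s N (ε / 3) K := by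
  have : Nonempty X := ⟨f 0⟩
  choose F hF_fin hF using fun n => exists_finite_bowenBall_cover hbdd n (div_pos hε three_pos)
  let S : Set (ℕ × X) := {p | N ≤ p.1 ∧ p.2 ∈ F p.1}
  have hS : Tendsto (fun p : S => p.1.1) cofinite atTop :=
    tendsto_fst_cofinite_atTop fun n => (hF_fin n).subset fun _ hx => hx.2
  obtain ⟨σ, hσ, hσ_mem, -⟩ := exists_seq_strictAnti_tendsto' hst
  rw [Mpre_eq_bowenCost] at hpos
  obtain ⟨c, hc₀, hc⟩ := exists_between <|
    hpos.trans_le (bowenCost_anti (S := S) (hσ_mem 0).2.le fun _ hp => hp.1)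
  obtain ⟨K, hKf, hK, hcK⟩ := exists_isCompact_le_coverCost
    (fun p : S => isOpen_bowenBall hT hε) hf
    (fun k => negligibleWeight_expWeight hS (hσ k.lt_succ_self))
    (fun k p => antitone_expWeight (hσ_mem k).1.le p.1.1) hc
  refine ⟨K, hKf, hK, (hc₀.trans_le hcK).trans_le ?_⟩
  rw [Mpre_eq_bowenCost]
  exact bowenCost_le_of_bowenBall_cover fun n => hKf.trans (hF n)

end BowenCost

section BowenEntropy

variable {X : Type*} [MetricSpace X] {T : X → X} {s t ε : ℝ} {N : ℕ} {A B : Set X}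

lemma Mpre_mono (h : A ⊆ B) : Mpre T s N ε A ≤ Mpre T s N ε B := by
  unfold Mpre
  gcongr
  exact iInf_mono' fun hB => ⟨h.trans hB, le_rfl⟩

lemma bowenEntropy_mono (h : A ⊆ B) : bowenEntropy T A ≤ bowenEntropy T B := by
  refine iSup₂_mono' fun s hs => ⟨s, top_le_iff.1 ?_, le_rfl⟩
  rw [← hs]
  exact iSup₂_mono fun ε _ => iSup_mono fun N => Mpre_mono h

lemma Mpre_mono_nat [Nonempty X] {M : ℕ} (h : M ≤ N) : Mpre T s M ε A ≤ Mpre T s N ε A := by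
  rw [Mpre_eq_bowenCost, Mpre_eq_bowenCost]
  exact bowenCost_anti le_rfl fun _ hp => h.trans hp

lemma Mpre_le_expWeight_mul [Nonempty X] (hst : s ≤ t) :
    Mpre T t N ε A ≤ expWeight (t - s) N * Mpre T s N ε A := by
  rw [Mpre_eq_bowenCost, Mpre_eq_bowenCost]
  refine coverCost_le_mul (expWeight_ne_zero _ _) (expWeight_ne_top _ _) fun p => ?_
  calc expWeight t p.1.1 = expWeight (t - s) p.1.1 * expWeight s p.1.1 := by
        rw [← expWeight_add, sub_add_cancel]
    _ ≤ expWeight (t - s) N * expWeight s p.1.1 := by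
        gcongr
        exact antitone_expWeight_apply (sub_nonneg.2 hst) p.2

lemma Mpre_le_Mtop (hε : 0 < ε) (N : ℕ) : Mpre T s N ε A ≤ Mtop T s A :=
  le_iSup₂_of_le ε hε (le_iSup (fun N => Mpre T s N ε A) N)

lemma Mtop_eq_top_of_Mpre_pos [Nonempty X] (hst : s < t) (hε : 0 < ε)
    (hpos : 0 < Mpre T t N ε A) : Mtop T s A = ∞ := by
  by_contra hfin
  have hlim : Tendsto (fun n => expWeight (t - s) n * Mtop T s A) atTop (𝓝 0) := by
    simpa only [zero_mul] using
      ENNReal.Tendsto.mul_const (tendsto_expWeight (sub_pos.2 hst)) (Or.inr hfin)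
  have hle : ∀ n ≥ N, Mpre T t N ε A ≤ expWeight (t - s) n * Mtop T s A := fun n hn =>
    calc Mpre T t N ε A ≤ Mpre T t n ε A := Mpre_mono_nat hn
      _ ≤ expWeight (t - s) n * Mpre T s n ε A := Mpre_le_expWeight_mul hst.le
      _ ≤ expWeight (t - s) n * Mtop T s A := by gcongr; exact Mpre_le_Mtop hε n
  exact hpos.not_ge (ge_of_tendsto hlim (eventually_atTop.2 ⟨N, hle⟩))

lemma lt_bowenEntropy_iff [Nonempty X] {a : ℝ≥0∞} :
    a < bowenEntropy T A ↔
      ∃ s, a < ENNReal.ofReal s ∧ ∃ ε > 0, ∃ N, 0 < Mpre T s N ε A := by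
  constructor
  · intro ha
    simp only [bowenEntropy, lt_iSup_iff] at ha
    obtain ⟨s, hs, has⟩ := ha
    have hpos : 0 < Mtop T s A := hs ▸ ENNReal.zero_lt_top
    simp only [Mtop, MpreEps, lt_iSup_iff] at hpos
    obtain ⟨ε, hε, N, hpos⟩ := hpos
    exact ⟨s, has, ε, hε, N, hpos⟩
  · rintro ⟨t, hat, ε, hε, N, hpos⟩
    obtain ⟨s, has, hst⟩ := exists_between ((ENNReal.lt_ofReal_iff_toReal_lt hat.ne_top).1 hat)
    exact ((ENNReal.lt_ofReal_iff_toReal_lt hat.ne_top).2 has).trans_le <|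
      le_iSup₂_of_le s (Mtop_eq_top_of_Mpre_pos hst hε hpos) le_rfl

theorem bowenEntropy_analytic_eq_iSup_compact_general {T : X → X} (hT : Continuous T) {Z : Set X}
    (hZ : AnalyticSet Z) (hbdd : ∀ k, TotallyBounded (T^[k] '' Z)) :
    bowenEntropy T Z = ⨆ (K : Set X) (_ : K ⊆ Z) (_ : IsCompact K), bowenEntropy T K := by
  refine le_antisymm ?_ (iSup_le fun K => iSup₂_le fun hKZ _ => bowenEntropy_mono hKZ)
  rw [AnalyticSet] at hZ
  rcases hZ with rfl | ⟨f, hf, rfl⟩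
  · exact le_iSup_of_le ∅ (le_iSup₂_of_le subset_rfl isCompact_empty le_rfl)
  have : Nonempty X := ⟨f 0⟩
  refine le_of_forall_lt fun a ha => ?_
  obtain ⟨t, hat, ε, hε, N, hpos⟩ := lt_bowenEntropy_iff.1 ha
  obtain ⟨s, has, hst⟩ := exists_between ((ENNReal.lt_ofReal_iff_toReal_lt hat.ne_top).1 hat)
  obtain ⟨K, hKf, hK, hKpos⟩ := exists_isCompact_Mpre_pos hT hf hbdd hst hε hpos
  have haK : a < bowenEntropy T K := lt_bowenEntropy_iff.2
    ⟨s, (ENNReal.lt_ofReal_iff_toReal_lt hat.ne_top).2 has, ε / 3, div_pos hε three_pos, N, hKpos⟩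
  exact haK.trans_le (le_iSup_of_le K (le_iSup₂_of_le hKf hK le_rfl))

end BowenEntropy

/-- **Feng–Huang, Theorem 1.1(ii)**: if `(X,T)` is a topological dynamical system with
finite topological entropy `h_top(T) = h^B_top(T,X) < ∞`, then for every analytic set
`Z ⊆ X`, `h^B_top(T,Z) = sup { h^B_top(T,K) : K ⊆ Z compact }`. -/
theorem bowenEntropy_analytic_eq_iSup_compact
    {X : Type*} [MetricSpace X] [CompactSpace X]
    (T : X → X) (hT : Continuous T) (hfin : bowenEntropy T Set.univ ≠ ∞)
    (Z : Set X) (hZ : MeasureTheory.AnalyticSet Z) :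
    bowenEntropy T Z = ⨆ (K : Set X) (_ : K ⊆ Z) (_ : IsCompact K), bowenEntropy T K := by
  exact bowenEntropy_analytic_eq_iSup_compact_general hT hZ fun k =>
    isCompact_univ.totallyBounded.subset (subset_univ _)
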